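/- Let ρ > 0 and let X be a normed space. Suppose β assigns to each x ∈ X a function β(x) in the Filipović space H_ρ (with a derivative assignment x ↦ δ(x)) such that lim_{ξ→∞} β(x)(ξ) = 0 for every x. Assume β is locally Lipschitz in the ball sense as a map into (H_ρ, ‖·‖_ρ), i.e., there is an increasing L : [0,∞) → [0,∞) with ‖β(x₁) − β(x₂)‖_ρ ≤ L(r)·‖x₁ − x₂‖_X whenever ‖x₁‖_X ≤ r and ‖x₂‖_X ≤ r, and that there is a constant K > 0 with ‖β(x)‖_ρ ≤ K·√(1 + ‖x‖_X) for all x ∈ X. Then the map α(x) := β(x)·𝓘β(x), where (𝓘β(x))(ξ) = ∫_0^ξ β(x)(t) dt, satisfies: α(x) ∈ H_ρ with lim_{ξ→∞} α(x)(ξ) = 0 for every x; α is locally Lipschitz in the ball sense as a map into (H_ρ, ‖·‖_ρ); and there exists a constant C > 0 with ‖α(x)‖_ρ ≤ C·(1 + ‖x‖_X) for all x ∈ X. -/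

import Mathlib

open MeasureTheory Filter

/-- `h : [0,∞) → ℝ` belongs to the Filipović space `H_ρ` with derivative `g`:
`g` is (a.e.) measurable on `[0,∞)`, `h x = h 0 + ∫_0^x g(t) dt` for all `x ≥ 0`, and
`∫_0^∞ g(t)² e^{ρ t} dt < ∞`. -/
def MemFil (ρ : ℝ) (h g : ℝ → ℝ) : Prop :=
  AEMeasurable g (volume.restrict (Set.Ici (0:ℝ))) ∧
  (∀ x : ℝ, 0 ≤ x → h x = h 0 + ∫ t in (0:ℝ)..x, g t) ∧
  IntegrableOn (fun t => (g t) ^ 2 * Real.exp (ρ * t)) (Set.Ici (0:ℝ))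

/-- The Filipović norm `‖h‖_ρ = (h(0)² + ∫_0^∞ g(t)² e^{ρ t} dt)^{1/2}`. -/
noncomputable def filNorm (ρ : ℝ) (h g : ℝ → ℝ) : ℝ :=
  Real.sqrt ((h 0) ^ 2 + ∫ t in Set.Ici (0:ℝ), (g t) ^ 2 * Real.exp (ρ * t))

/-!
Multiplying a function by the square root `e^{ρt/2}` of the weight turns the Filipović norm into an
honest Hilbert norm on `ℝ × L²([0,∞))`. If `h` vanishes at infinity then `h x = -∫_x^∞ g`, so
Cauchy–Schwarz gives `|h x| ≤ ‖h‖_ρ e^{-ρx/2} / √ρ`, and hence `𝓘h` is bounded by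
`2 ‖h‖_ρ / (ρ√ρ)`. Both terms of `(h₁ · 𝓘h₂)' = g₁ · 𝓘h₂ + h₁ h₂` are then square integrable against
`e^{ρt}`, and the bilinear map `(h₁, h₂) ↦ h₁ · 𝓘h₂` satisfies
`‖h₁ · 𝓘h₂‖_ρ ≤ 3 / (ρ√ρ) · ‖h₁‖_ρ ‖h₂‖_ρ`. The map `α` is its composition with the diagonal of `β`,
whence the growth bound; polarization
`h₁ · 𝓘h₁ - h₂ · 𝓘h₂ = (h₁ - h₂) · 𝓘h₁ + h₂ · 𝓘(h₁ - h₂)` gives the Lipschitz bound, because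
`β`, being Lipschitz on a ball, is bounded there.
-/

section SquareIntegrable

variable {Ω : Type*} [MeasurableSpace Ω] {μ : Measure Ω} {f g : Ω → ℝ}

lemma norm_toLp_two_eq_sqrt_integral_sq (hf : MemLp f 2 μ) :
    ‖hf.toLp f‖ = √(∫ x, f x ^ 2 ∂μ) := by
  rw [Lp.norm_toLp, hf.eLpNorm_eq_integral_rpow_norm two_ne_zero ENNReal.ofNat_ne_top,
    ENNReal.toReal_ofReal (by positivity), Real.sqrt_eq_rpow]
  simp

lemma abs_integral_mul_le_sqrt_mul_sqrt (hf : MemLp f 2 μ) (hg : MemLp g 2 μ) :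
    |∫ x, f x * g x ∂μ| ≤ √(∫ x, f x ^ 2 ∂μ) * √(∫ x, g x ^ 2 ∂μ) := by
  have inner_eq : inner ℝ (hg.toLp g) (hf.toLp f) = ∫ x, f x * g x ∂μ := by
    rw [L2.inner_def]
    refine integral_congr_ae ?_
    filter_upwards [hf.coeFn_toLp, hg.coeFn_toLp] with x hfx hgx
    simp [hfx, hgx]
  rw [← inner_eq, ← norm_toLp_two_eq_sqrt_integral_sq hf, ← norm_toLp_two_eq_sqrt_integral_sq hg,
    mul_comm]
  exact abs_real_inner_le_norm _ _

end SquareIntegrable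

section ExpDecay

variable {c : ℝ}

lemma memLp_two_exp_neg_mul_Ici (hc : 0 < c) (x : ℝ) :
    MemLp (fun t => Real.exp (-c * t)) 2 (volume.restrict (Set.Ici x)) := by
  have hmeas : Measurable fun t => Real.exp (-c * t) := by fun_prop
  rw [memLp_two_iff_integrable_sq hmeas.aestronglyMeasurable, ← IntegrableOn,
    integrableOn_Ici_iff_integrableOn_Ioi]
  refine (integrableOn_exp_mul_Ioi (a := -(2 * c)) (by linarith) x).congr_fun (fun t _ => ?_)
    measurableSet_Ioi
  simp only [← Real.exp_nat_mul]
  congr 1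
  push_cast
  ring

lemma sqrt_integral_Ici_exp_neg_mul_sq (hc : 0 < c) (x : ℝ) :
    √(∫ t in Set.Ici x, Real.exp (-c * t) ^ 2) = Real.exp (-c * x) / √(2 * c) := by
  have exp_sq (t : ℝ) : Real.exp (-c * t) ^ 2 = Real.exp (-(2 * c) * t) := by
    rw [← Real.exp_nat_mul]
    congr 1
    push_cast
    ring
  simp_rw [exp_sq]
  rw [integral_Ici_eq_integral_Ioi, integral_exp_mul_Ioi (by linarith), neg_div_neg_eq, ← exp_sq,
    Real.sqrt_div (sq_nonneg _), Real.sqrt_sq (Real.exp_pos _).le]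

end ExpDecay

/-- The antiderivative `𝓘h` of `h` that vanishes at `0`. -/
noncomputable def primitive (h : ℝ → ℝ) (x : ℝ) : ℝ := ∫ t in (0 : ℝ)..x, h t

section Primitive

variable {h g : ℝ → ℝ} {c x M : ℝ}

@[simp]
lemma primitive_zero : primitive h 0 = 0 := intervalIntegral.integral_same

lemma primitive_sub (hh : IntervalIntegrable h volume 0 x) (hg : IntervalIntegrable g volume 0 x) :
    primitive (fun t => h t - g t) x = primitive h x - primitive g x :=
  intervalIntegral.integral_sub hh hg

lemma abs_primitive_le_of_abs_le_exp (hc : 0 < c)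
    (hh : ∀ t, 0 ≤ t → |h t| ≤ M * Real.exp (-c * t)) (hx : 0 ≤ x) :
    |primitive h x| ≤ M / c := by
  have hM : 0 ≤ M := by simpa using (abs_nonneg _).trans (hh 0 le_rfl)
  have hexp : IntegrableOn (fun t => Real.exp (-c * t)) (Set.Ioi 0) :=
    integrableOn_exp_mul_Ioi (by linarith) 0
  have hbound : IntervalIntegrable (fun t => M * Real.exp (-c * t)) volume 0 x :=
    Continuous.intervalIntegrable (by fun_prop) _ _
  calc |primitive h x| = ‖∫ t in (0 : ℝ)..x, h t‖ := rfl
    _ ≤ ∫ t in (0 : ℝ)..x, M * Real.exp (-c * t) :=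
        intervalIntegral.norm_integral_le_of_norm_le hx
          (Eventually.of_forall fun t ht => hh t ht.1.le) hbound
    _ = M * ∫ t in Set.Ioc 0 x, Real.exp (-c * t) := by
        rw [intervalIntegral.integral_const_mul, intervalIntegral.integral_of_le hx]
    _ ≤ M * ∫ t in Set.Ioi 0, Real.exp (-c * t) :=
        mul_le_mul_of_nonneg_left (setIntegral_mono_set hexp
          (Eventually.of_forall fun t => (Real.exp_pos _).le)
          Set.Ioc_subset_Ioi_self.eventuallyLE) hM
    _ = M / c := by
        rw [integral_exp_mul_Ioi (by linarith)]
        simp [div_eq_mul_inv]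

lemma continuousOn_primitive_Ici (hg : ∀ x, 0 ≤ x → IntervalIntegrable g volume 0 x) :
    ContinuousOn (primitive g) (Set.Ici 0) := by
  intro x (hx : 0 ≤ x)
  have hcont := intervalIntegral.continuousOn_primitive_interval' (hg (x + 1) (by linarith))
    Set.left_mem_uIcc
  rw [Set.uIcc_of_le (by linarith)] at hcont
  refine (hcont x ⟨hx, by linarith⟩).mono_of_mem_nhdsWithin ?_
  rw [← Set.Ici_inter_Iic]
  exact inter_mem_nhdsWithin _ (Iic_mem_nhds (by linarith))

end Primitive

lemma integral_mul_add_mul_eq_sub_of_eq_integral {u u' v v' : ℝ → ℝ} {a b : ℝ}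
    (hu' : IntervalIntegrable u' volume a b) (hv' : IntervalIntegrable v' volume a b)
    (hu : ∀ x ∈ Set.uIcc a b, u x = u a + ∫ t in a..x, u' t)
    (hv : ∀ x ∈ Set.uIcc a b, v x = v a + ∫ t in a..x, v' t) :
    ∫ t in a..b, (u' t * v t + u t * v' t) = u b * v b - u a * v a := by
  have ac_const (w : ℝ) : AbsolutelyContinuousOnInterval (fun _ : ℝ => w) a b :=
    (contDiffOn_const (n := 1)).absolutelyContinuousOnInterval
  have ac_u := (ac_const (u a)).fun_add
    (hu'.absolutelyContinuousOnInterval_intervalIntegral Set.left_mem_uIcc)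
  have ac_v := (ac_const (v a)).fun_add
    (hv'.absolutelyContinuousOnInterval_intervalIntegral Set.left_mem_uIcc)
  have parts := ac_u.integral_deriv_mul_eq_sub ac_v
  rw [← hu b Set.right_mem_uIcc, ← hv b Set.right_mem_uIcc, ← hu a Set.left_mem_uIcc,
    ← hv a Set.left_mem_uIcc] at parts
  rw [← parts]
  refine intervalIntegral.integral_congr_ae ?_
  filter_upwards [hu'.ae_hasDerivAt_integral, hv'.ae_hasDerivAt_integral] with t du dv ht
  have ht := Set.uIoc_subset_uIcc ht
  rw [((du ht a Set.left_mem_uIcc).const_add (u a)).deriv,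
    ((dv ht a Set.left_mem_uIcc).const_add (v a)).deriv, ← hu t ht, ← hv t ht]

/-- `g` times the square root `e^{ρt/2}` of the weight of `H_ρ`, so that the weighted `L²` theory of
`g` becomes the Lebesgue `L²` theory of `expWeighted ρ g`. -/
noncomputable def expWeighted (ρ : ℝ) (g : ℝ → ℝ) (t : ℝ) : ℝ := g t * Real.exp (ρ / 2 * t)

/-- Membership in the weighted space `L²([0,∞), e^{ρt} dt)`, in which the derivatives of the
elements of `H_ρ` live. -/
abbrev MemExpL2 (ρ : ℝ) (g : ℝ → ℝ) : Prop :=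
  MemLp (expWeighted ρ g) 2 (volume.restrict (Set.Ici (0 : ℝ)))

section WeightedL2

variable {ρ : ℝ} {f g : ℝ → ℝ}

lemma expWeighted_sq (ρ : ℝ) (g : ℝ → ℝ) (t : ℝ) :
    expWeighted ρ g t ^ 2 = g t ^ 2 * Real.exp (ρ * t) := by
  rw [expWeighted, mul_pow, ← Real.exp_nat_mul]
  congr 2
  push_cast
  ring

lemma expWeighted_add (ρ : ℝ) (f g : ℝ → ℝ) :
    expWeighted ρ (fun t => f t + g t) = expWeighted ρ f + expWeighted ρ g :=
  funext fun _ => add_mul _ _ _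

lemma expWeighted_sub (ρ : ℝ) (f g : ℝ → ℝ) :
    expWeighted ρ (fun t => f t - g t) = expWeighted ρ f - expWeighted ρ g :=
  funext fun _ => sub_mul _ _ _

lemma expWeighted_mul_exp_neg (ρ : ℝ) (g : ℝ → ℝ) (t : ℝ) :
    expWeighted ρ g t * Real.exp (-(ρ / 2) * t) = g t := by
  rw [expWeighted, mul_assoc, ← Real.exp_add]
  simp

lemma abs_expWeighted (ρ : ℝ) (g : ℝ → ℝ) (t : ℝ) :
    |expWeighted ρ g t| = |g t| * Real.exp (ρ / 2 * t) := by
  rw [expWeighted, abs_mul, Real.abs_exp]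

lemma expWeighted_exp_neg (ρ : ℝ) :
    expWeighted ρ (fun t => Real.exp (-ρ * t)) = fun t => Real.exp (-(ρ / 2) * t) := by
  funext t
  rw [expWeighted, ← Real.exp_add]
  congr 1
  ring

lemma memExpL2_iff :
    MemExpL2 ρ g ↔ AEMeasurable g (volume.restrict (Set.Ici (0 : ℝ))) ∧
      IntegrableOn (fun t => g t ^ 2 * Real.exp (ρ * t)) (Set.Ici (0 : ℝ)) := by
  have exp_meas (c : ℝ) : Measurable fun t => Real.exp (c * t) := by fun_prop
  simp only [← expWeighted_sq]
  constructor
  · intro hg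
    refine ⟨?_, hg.integrable_sq⟩
    exact (hg.aestronglyMeasurable.aemeasurable.mul (exp_meas (-(ρ / 2))).aemeasurable).congr
      (ae_of_all _ (expWeighted_mul_exp_neg ρ g))
  · rintro ⟨hmeas, hint⟩
    exact (memLp_two_iff_integrable_sq
      (hmeas.mul (exp_meas (ρ / 2)).aemeasurable).aestronglyMeasurable).2 hint

namespace MemExpL2

lemma aemeasurable (hg : MemExpL2 ρ g) : AEMeasurable g (volume.restrict (Set.Ici (0 : ℝ))) :=
  (memExpL2_iff.1 hg).1

lemma add (hf : MemExpL2 ρ f) (hg : MemExpL2 ρ g) : MemExpL2 ρ (fun t => f t + g t) := by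
  rw [MemExpL2, expWeighted_add]
  exact MemLp.add hf hg

lemma sub (hf : MemExpL2 ρ f) (hg : MemExpL2 ρ g) : MemExpL2 ρ (fun t => f t - g t) := by
  rw [MemExpL2, expWeighted_sub]
  exact MemLp.sub hf hg

lemma of_abs_le_mul {M : ℝ} (hg : MemExpL2 ρ g)
    (hf : AEMeasurable f (volume.restrict (Set.Ici (0 : ℝ))))
    (hle : ∀ t, 0 ≤ t → |f t| ≤ M * |g t|) : MemExpL2 ρ f := by
  have exp_meas : Measurable fun t => Real.exp (ρ / 2 * t) := by fun_prop
  refine MemLp.of_le_mul (c := M) hg (hf.mul exp_meas.aemeasurable).aestronglyMeasurable ?_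
  filter_upwards [ae_restrict_mem measurableSet_Ici] with t ht
  rw [Real.norm_eq_abs, Real.norm_eq_abs, abs_expWeighted, abs_expWeighted, ← mul_assoc]
  gcongr
  exact hle t ht

lemma exp_neg (hρ : 0 < ρ) : MemExpL2 ρ (fun t => Real.exp (-ρ * t)) := by
  rw [MemExpL2, expWeighted_exp_neg]
  exact memLp_two_exp_neg_mul_Ici (half_pos hρ) 0

lemma integrableOn (hρ : 0 < ρ) (hg : MemExpL2 ρ g) : IntegrableOn g (Set.Ici 0) :=
  (MemLp.integrable_mul hg (memLp_two_exp_neg_mul_Ici (half_pos hρ) 0)).congr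
    (ae_of_all _ (expWeighted_mul_exp_neg ρ g))

lemma intervalIntegrable (hρ : 0 < ρ) (hg : MemExpL2 ρ g) {x : ℝ} (hx : 0 ≤ x) :
    IntervalIntegrable g volume 0 x := by
  rw [intervalIntegrable_iff_integrableOn_Icc_of_le hx]
  exact (hg.integrableOn hρ).mono_set Set.Icc_subset_Ici_self

end MemExpL2

end WeightedL2

section FilNorm

variable {ρ : ℝ} {h h₁ h₂ f g g₁ g₂ : ℝ → ℝ}

lemma filNorm_eq_sqrt (ρ : ℝ) (h g : ℝ → ℝ) :
    filNorm ρ h g = √(h 0 ^ 2 + ∫ t in Set.Ici (0 : ℝ), expWeighted ρ g t ^ 2) := by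
  simp only [filNorm, expWeighted_sq]

lemma filNorm_nonneg (ρ : ℝ) (h g : ℝ → ℝ) : 0 ≤ filNorm ρ h g := Real.sqrt_nonneg _

lemma filNorm_zero_left (ρ : ℝ) (g : ℝ → ℝ) :
    filNorm ρ 0 g = √(∫ t in Set.Ici (0 : ℝ), expWeighted ρ g t ^ 2) := by
  simp [filNorm_eq_sqrt]

lemma filNorm_zero_left_le (ρ : ℝ) (h g : ℝ → ℝ) : filNorm ρ 0 g ≤ filNorm ρ h g := by
  rw [filNorm_zero_left, filNorm_eq_sqrt]
  exact Real.sqrt_le_sqrt (le_add_of_nonneg_left (sq_nonneg _))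

lemma filNorm_congr (hzero : h₁ 0 = h₂ 0) (hderiv : ∀ t, 0 ≤ t → g₁ t = g₂ t) :
    filNorm ρ h₁ g₁ = filNorm ρ h₂ g₂ := by
  rw [filNorm, filNorm, hzero]
  congr 2
  exact setIntegral_congr_fun measurableSet_Ici fun t ht => by simp only [hderiv t ht]

lemma filNorm_eq_norm_toLp (h : ℝ → ℝ) (hg : MemExpL2 ρ g) :
    filNorm ρ h g = ‖WithLp.toLp 2 (h 0, MemLp.toLp (expWeighted ρ g) hg)‖ := by
  rw [WithLp.prod_norm_eq_of_L2, filNorm_eq_sqrt, WithLp.toLp_fst, WithLp.toLp_snd,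
    norm_toLp_two_eq_sqrt_integral_sq hg, Real.sq_sqrt (integral_nonneg fun t => sq_nonneg _),
    Real.norm_eq_abs, sq_abs]

lemma filNorm_add_le (h₁ h₂ : ℝ → ℝ) (hg₁ : MemExpL2 ρ g₁) (hg₂ : MemExpL2 ρ g₂) :
    filNorm ρ (fun t => h₁ t + h₂ t) (fun t => g₁ t + g₂ t)
      ≤ filNorm ρ h₁ g₁ + filNorm ρ h₂ g₂ := by
  rw [filNorm_eq_norm_toLp _ (hg₁.add hg₂), filNorm_eq_norm_toLp _ hg₁, filNorm_eq_norm_toLp _ hg₂]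
  simp only [expWeighted_add]
  exact norm_add_le (WithLp.toLp 2 (h₁ 0, MemLp.toLp _ hg₁))
    (WithLp.toLp 2 (h₂ 0, MemLp.toLp _ hg₂))

lemma filNorm_zero_left_le_mul {M : ℝ} (hM : 0 ≤ M) (hg : MemExpL2 ρ g)
    (hle : ∀ t, 0 ≤ t → |f t| ≤ M * |g t|) : filNorm ρ 0 f ≤ M * filNorm ρ 0 g := by
  rw [filNorm_zero_left, filNorm_zero_left, ← Real.sqrt_sq hM, ← Real.sqrt_mul (sq_nonneg M),
    ← integral_const_mul]
  refine Real.sqrt_le_sqrt (integral_mono_of_nonneg (Eventually.of_forall fun t => sq_nonneg _)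
    (hg.integrable_sq.const_mul _) ?_)
  filter_upwards [ae_restrict_mem measurableSet_Ici] with t ht
  rw [← mul_pow]
  refine sq_le_sq.2 ?_
  rw [abs_mul, abs_of_nonneg hM, abs_expWeighted, abs_expWeighted, ← mul_assoc]
  gcongr
  exact hle t ht

lemma filNorm_zero_left_exp_neg (hρ : 0 < ρ) :
    filNorm ρ 0 (fun t => Real.exp (-ρ * t)) = 1 / √ρ := by
  rw [filNorm_zero_left, expWeighted_exp_neg, sqrt_integral_Ici_exp_neg_mul_sq (half_pos hρ),
    mul_div_cancel₀ _ two_ne_zero]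
  simp

lemma MemExpL2.abs_integral_Ioi_le (hρ : 0 < ρ) (hg : MemExpL2 ρ g) {x : ℝ} (hx : 0 ≤ x) :
    |∫ t in Set.Ioi x, g t| ≤ filNorm ρ 0 g / √ρ * Real.exp (-(ρ / 2) * x) := by
  have hsub : Set.Ici x ⊆ Set.Ici 0 := Set.Ici_subset_Ici.2 hx
  calc |∫ t in Set.Ioi x, g t|
      = |∫ t in Set.Ici x, expWeighted ρ g t * Real.exp (-(ρ / 2) * t)| := by
        simp only [expWeighted_mul_exp_neg, integral_Ici_eq_integral_Ioi]
    _ ≤ √(∫ t in Set.Ici x, expWeighted ρ g t ^ 2)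
          * √(∫ t in Set.Ici x, Real.exp (-(ρ / 2) * t) ^ 2) :=
        abs_integral_mul_le_sqrt_mul_sqrt (hg.mono_measure (Measure.restrict_mono_set _ hsub))
          (memLp_two_exp_neg_mul_Ici (half_pos hρ) x)
    _ ≤ filNorm ρ 0 g * (Real.exp (-(ρ / 2) * x) / √ρ) := by
        rw [sqrt_integral_Ici_exp_neg_mul_sq (half_pos hρ), mul_div_cancel₀ _ two_ne_zero,
          filNorm_zero_left]
        exact mul_le_mul_of_nonneg_right (Real.sqrt_le_sqrt (setIntegral_mono_set hg.integrable_sq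
          (Eventually.of_forall fun t => sq_nonneg _) hsub.eventuallyLE)) (by positivity)
    _ = filNorm ρ 0 g / √ρ * Real.exp (-(ρ / 2) * x) := by ring

end FilNorm

/-- The space `H⁰_ρ`: `h` belongs to `H_ρ` with derivative `g` and vanishes at infinity. -/
structure MemFilZero (ρ : ℝ) (h g : ℝ → ℝ) : Prop where
  memFil : MemFil ρ h g
  tendsto_zero : Tendsto h atTop (nhds 0)

section MemFil

variable {ρ : ℝ} {h g h₁ g₁ h₂ g₂ : ℝ → ℝ} {x : ℝ}

namespace MemFil

lemma memExpL2 (H : MemFil ρ h g) : MemExpL2 ρ g := memExpL2_iff.2 ⟨H.1, H.2.2⟩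

lemma eq_add_primitive (H : MemFil ρ h g) (hx : 0 ≤ x) : h x = h 0 + primitive g x := H.2.1 x hx

lemma of_memExpL2 (hg : MemExpL2 ρ g) (hprim : ∀ x, 0 ≤ x → h x = h 0 + primitive g x) :
    MemFil ρ h g :=
  ⟨hg.aemeasurable, hprim, (memExpL2_iff.1 hg).2⟩

lemma continuousOn (hρ : 0 < ρ) (H : MemFil ρ h g) : ContinuousOn h (Set.Ici 0) :=
  (continuousOn_const.add (continuousOn_primitive_Ici fun _ =>
    H.memExpL2.intervalIntegrable hρ)).congr fun _ hx => H.eq_add_primitive hx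

lemma intervalIntegrable (hρ : 0 < ρ) (H : MemFil ρ h g) (hx : 0 ≤ x) :
    IntervalIntegrable h volume 0 x := by
  refine ContinuousOn.intervalIntegrable ((H.continuousOn hρ).mono ?_)
  rw [Set.uIcc_of_le hx]
  exact Set.Icc_subset_Ici_self

lemma aemeasurable (hρ : 0 < ρ) (H : MemFil ρ h g) :
    AEMeasurable h (volume.restrict (Set.Ici (0 : ℝ))) :=
  (H.continuousOn hρ).aemeasurable measurableSet_Ici

lemma aemeasurable_primitive (hρ : 0 < ρ) (H : MemFil ρ h g) :
    AEMeasurable (primitive h) (volume.restrict (Set.Ici (0 : ℝ))) :=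
  (continuousOn_primitive_Ici fun _ => H.intervalIntegrable hρ).aemeasurable measurableSet_Ici

lemma sub (hρ : 0 < ρ) (H₁ : MemFil ρ h₁ g₁) (H₂ : MemFil ρ h₂ g₂) :
    MemFil ρ (fun t => h₁ t - h₂ t) (fun t => g₁ t - g₂ t) := by
  refine of_memExpL2 (H₁.memExpL2.sub H₂.memExpL2) fun x hx => ?_
  rw [primitive_sub (H₁.memExpL2.intervalIntegrable hρ hx) (H₂.memExpL2.intervalIntegrable hρ hx),
    H₁.eq_add_primitive hx, H₂.eq_add_primitive hx]
  ring

end MemFil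

namespace MemFilZero

lemma sub (hρ : 0 < ρ) (H₁ : MemFilZero ρ h₁ g₁) (H₂ : MemFilZero ρ h₂ g₂) :
    MemFilZero ρ (fun t => h₁ t - h₂ t) (fun t => g₁ t - g₂ t) :=
  ⟨H₁.memFil.sub hρ H₂.memFil, by simpa using H₁.tendsto_zero.sub H₂.tendsto_zero⟩

lemma eq_neg_integral_Ioi (hρ : 0 < ρ) (H : MemFilZero ρ h g) (hx : 0 ≤ x) :
    h x = -∫ t in Set.Ioi x, g t := by
  have hg : IntegrableOn g (Set.Ioi x) :=
    (H.memFil.memExpL2.integrableOn hρ).mono_set (Set.Ioi_subset_Ici hx)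
  have increment : ∀ᶠ y in atTop, ∫ t in x..y, g t = h y - h x := by
    filter_upwards [eventually_ge_atTop x] with y hy
    have hint {z : ℝ} (hz : 0 ≤ z) := H.memFil.memExpL2.intervalIntegrable hρ hz
    rw [H.memFil.eq_add_primitive hx, H.memFil.eq_add_primitive (hx.trans hy),
      add_sub_add_left_eq_sub]
    exact (intervalIntegral.integral_interval_sub_left (hint (hx.trans hy)) (hint hx)).symm
  have hlim := (intervalIntegral_tendsto_integral_Ioi x hg tendsto_id).congr' increment
  rw [tendsto_nhds_unique hlim (H.tendsto_zero.sub_const (h x))]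
  ring

lemma abs_le (hρ : 0 < ρ) (H : MemFilZero ρ h g) (hx : 0 ≤ x) :
    |h x| ≤ filNorm ρ h g / √ρ * Real.exp (-(ρ / 2) * x) := by
  rw [H.eq_neg_integral_Ioi hρ hx, abs_neg]
  refine (H.memFil.memExpL2.abs_integral_Ioi_le hρ hx).trans ?_
  gcongr
  exact filNorm_zero_left_le ρ h g

lemma abs_mul_le (hρ : 0 < ρ) (H₁ : MemFilZero ρ h₁ g₁) (H₂ : MemFilZero ρ h₂ g₂) (hx : 0 ≤ x) :
    |h₁ x * h₂ x| ≤ filNorm ρ h₁ g₁ * filNorm ρ h₂ g₂ / ρ * |Real.exp (-ρ * x)| := by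
  have exp_mul_self : Real.exp (-(ρ / 2) * x) * Real.exp (-(ρ / 2) * x) = Real.exp (-ρ * x) := by
    rw [← Real.exp_add]
    congr 1
    ring
  calc |h₁ x * h₂ x|
      ≤ (filNorm ρ h₁ g₁ / √ρ * Real.exp (-(ρ / 2) * x))
          * (filNorm ρ h₂ g₂ / √ρ * Real.exp (-(ρ / 2) * x)) := by
        rw [abs_mul]
        have := filNorm_nonneg ρ h₁ g₁
        exact mul_le_mul (H₁.abs_le hρ hx) (H₂.abs_le hρ hx) (abs_nonneg _) (by positivity)
    _ = filNorm ρ h₁ g₁ * filNorm ρ h₂ g₂ / (√ρ * √ρ)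
          * (Real.exp (-(ρ / 2) * x) * Real.exp (-(ρ / 2) * x)) := by ring
    _ = filNorm ρ h₁ g₁ * filNorm ρ h₂ g₂ / ρ * |Real.exp (-ρ * x)| := by
        rw [exp_mul_self, Real.mul_self_sqrt hρ.le, Real.abs_exp]

lemma abs_primitive_le (hρ : 0 < ρ) (H : MemFilZero ρ h g) (hx : 0 ≤ x) :
    |primitive h x| ≤ 2 / (ρ * √ρ) * filNorm ρ h g := by
  refine (abs_primitive_le_of_abs_le_exp (half_pos hρ) (fun _ => H.abs_le hρ) hx).trans_eq ?_
  field_simp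

end MemFilZero

end MemFil

/-- The product `h₁ · 𝓘h₂`; the map of the theorem is its diagonal `α(x) = β(x) · 𝓘β(x)`. -/
noncomputable def mulPrimitive (h₁ h₂ : ℝ → ℝ) (ξ : ℝ) : ℝ := h₁ ξ * primitive h₂ ξ

/-- The derivative `g₁ · 𝓘h₂ + h₁ h₂` of `h₁ · 𝓘h₂`, where `g₁` is the derivative of `h₁`. -/
noncomputable def mulPrimitiveDeriv (h₁ g₁ h₂ : ℝ → ℝ) (t : ℝ) : ℝ :=
  g₁ t * primitive h₂ t + h₁ t * h₂ t

section MulPrimitive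

variable {ρ : ℝ} {h₁ g₁ h₂ g₂ : ℝ → ℝ}

lemma mulPrimitive_zero (h₁ h₂ : ℝ → ℝ) : mulPrimitive h₁ h₂ 0 = 0 := by simp [mulPrimitive]

lemma MemFil.mulPrimitive_eq_primitive (hρ : 0 < ρ) (H₁ : MemFil ρ h₁ g₁) (H₂ : MemFil ρ h₂ g₂)
    {x : ℝ} (hx : 0 ≤ x) :
    mulPrimitive h₁ h₂ x = primitive (mulPrimitiveDeriv h₁ g₁ h₂) x := by
  have parts := integral_mul_add_mul_eq_sub_of_eq_integral (v := primitive h₂)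
    (H₁.memExpL2.intervalIntegrable hρ hx) (H₂.intervalIntegrable hρ hx)
    (fun y hy => H₁.eq_add_primitive (Set.uIcc_of_le hx ▸ hy).1)
    (fun y _ => by rw [primitive_zero, zero_add, primitive])
  rw [primitive_zero, mul_zero, sub_zero] at parts
  exact parts.symm

namespace MemFilZero

lemma abs_mul_primitive_le (hρ : 0 < ρ) (H₂ : MemFilZero ρ h₂ g₂) (g₁ : ℝ → ℝ) {t : ℝ}
    (ht : 0 ≤ t) : |g₁ t * primitive h₂ t| ≤ 2 / (ρ * √ρ) * filNorm ρ h₂ g₂ * |g₁ t| := by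
  rw [abs_mul, mul_comm]
  gcongr
  exact H₂.abs_primitive_le hρ ht

lemma memExpL2_mul_primitive (hρ : 0 < ρ) (hg₁ : MemExpL2 ρ g₁) (H₂ : MemFilZero ρ h₂ g₂) :
    MemExpL2 ρ (fun t => g₁ t * primitive h₂ t) :=
  hg₁.of_abs_le_mul (hg₁.aemeasurable.mul (H₂.memFil.aemeasurable_primitive hρ))
    fun _ => H₂.abs_mul_primitive_le hρ g₁

lemma memExpL2_mul (hρ : 0 < ρ) (H₁ : MemFilZero ρ h₁ g₁) (H₂ : MemFilZero ρ h₂ g₂) :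
    MemExpL2 ρ (fun t => h₁ t * h₂ t) :=
  (MemExpL2.exp_neg hρ).of_abs_le_mul
    ((H₁.memFil.aemeasurable hρ).mul (H₂.memFil.aemeasurable hρ)) fun _ => H₁.abs_mul_le hρ H₂

lemma memFilZero_mulPrimitive (hρ : 0 < ρ) (H₁ : MemFilZero ρ h₁ g₁) (H₂ : MemFilZero ρ h₂ g₂) :
    MemFilZero ρ (mulPrimitive h₁ h₂) (mulPrimitiveDeriv h₁ g₁ h₂) where
  memFil := by
    refine .of_memExpL2 ((H₂.memExpL2_mul_primitive hρ H₁.memFil.memExpL2).add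
      (H₁.memExpL2_mul hρ H₂)) fun x hx => ?_
    rw [mulPrimitive_zero, zero_add, H₁.memFil.mulPrimitive_eq_primitive hρ H₂.memFil hx]
  tendsto_zero := by
    refine squeeze_zero_norm' ?_ (by
      simpa using H₁.tendsto_zero.abs.const_mul (2 / (ρ * √ρ) * filNorm ρ h₂ g₂))
    filter_upwards [eventually_ge_atTop 0] with x hx
    exact H₂.abs_mul_primitive_le hρ h₁ hx

lemma filNorm_mulPrimitive_le (hρ : 0 < ρ) (H₁ : MemFilZero ρ h₁ g₁) (H₂ : MemFilZero ρ h₂ g₂) :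
    filNorm ρ (mulPrimitive h₁ h₂) (mulPrimitiveDeriv h₁ g₁ h₂)
      ≤ 3 / (ρ * √ρ) * (filNorm ρ h₁ g₁ * filNorm ρ h₂ g₂) := by
  have N₁_nonneg := filNorm_nonneg ρ h₁ g₁
  have N₂_nonneg := filNorm_nonneg ρ h₂ g₂
  have hg₁ := H₁.memFil.memExpL2
  calc filNorm ρ (mulPrimitive h₁ h₂) (mulPrimitiveDeriv h₁ g₁ h₂)
      = filNorm ρ (fun t => (0 : ℝ → ℝ) t + (0 : ℝ → ℝ) t)
          (fun t => g₁ t * primitive h₂ t + h₁ t * h₂ t) :=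
        filNorm_congr (by simp [mulPrimitive_zero]) fun _ _ => rfl
    _ ≤ filNorm ρ 0 (fun t => g₁ t * primitive h₂ t) + filNorm ρ 0 (fun t => h₁ t * h₂ t) :=
        filNorm_add_le 0 0 (H₂.memExpL2_mul_primitive hρ hg₁) (H₁.memExpL2_mul hρ H₂)
    _ ≤ 2 / (ρ * √ρ) * filNorm ρ h₂ g₂ * filNorm ρ 0 g₁
          + filNorm ρ h₁ g₁ * filNorm ρ h₂ g₂ / ρ * filNorm ρ 0 (fun t => Real.exp (-ρ * t)) :=
        add_le_add
          (filNorm_zero_left_le_mul (by positivity) hg₁ fun _ => H₂.abs_mul_primitive_le hρ g₁)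
          (filNorm_zero_left_le_mul (by positivity) (.exp_neg hρ) fun _ => H₁.abs_mul_le hρ H₂)
    _ ≤ 2 / (ρ * √ρ) * filNorm ρ h₂ g₂ * filNorm ρ h₁ g₁
          + filNorm ρ h₁ g₁ * filNorm ρ h₂ g₂ / ρ * (1 / √ρ) := by
        rw [filNorm_zero_left_exp_neg hρ]
        gcongr
        exact filNorm_zero_left_le ρ h₁ g₁
    _ = 3 / (ρ * √ρ) * (filNorm ρ h₁ g₁ * filNorm ρ h₂ g₂) := by ring

lemma filNorm_mulPrimitive_self_sub_le (hρ : 0 < ρ) (H₁ : MemFilZero ρ h₁ g₁)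
    (H₂ : MemFilZero ρ h₂ g₂) :
    filNorm ρ (fun t => mulPrimitive h₁ h₁ t - mulPrimitive h₂ h₂ t)
        (fun t => mulPrimitiveDeriv h₁ g₁ h₁ t - mulPrimitiveDeriv h₂ g₂ h₂ t)
      ≤ 3 / (ρ * √ρ) * (filNorm ρ h₁ g₁ + filNorm ρ h₂ g₂)
          * filNorm ρ (fun t => h₁ t - h₂ t) (fun t => g₁ t - g₂ t) := by
  set d : ℝ → ℝ := fun t => h₁ t - h₂ t
  set d' : ℝ → ℝ := fun t => g₁ t - g₂ t
  have D : MemFilZero ρ d d' := H₁.sub hρ H₂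
  calc filNorm ρ (fun t => mulPrimitive h₁ h₁ t - mulPrimitive h₂ h₂ t)
        (fun t => mulPrimitiveDeriv h₁ g₁ h₁ t - mulPrimitiveDeriv h₂ g₂ h₂ t)
      = filNorm ρ (fun t => mulPrimitive d h₁ t + mulPrimitive h₂ d t)
          (fun t => mulPrimitiveDeriv d d' h₁ t + mulPrimitiveDeriv h₂ g₂ d t) := by
        refine filNorm_congr (by simp only [mulPrimitive_zero, sub_zero, add_zero]) fun t ht => ?_
        have primitive_d : primitive d t = primitive h₁ t - primitive h₂ t :=
          primitive_sub (H₁.memFil.intervalIntegrable hρ ht) (H₂.memFil.intervalIntegrable hρ ht)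
        simp only [mulPrimitiveDeriv, primitive_d, d, d']
        ring
    _ ≤ filNorm ρ (mulPrimitive d h₁) (mulPrimitiveDeriv d d' h₁)
          + filNorm ρ (mulPrimitive h₂ d) (mulPrimitiveDeriv h₂ g₂ d) :=
        filNorm_add_le _ _ (D.memFilZero_mulPrimitive hρ H₁).memFil.memExpL2
          (H₂.memFilZero_mulPrimitive hρ D).memFil.memExpL2
    _ ≤ 3 / (ρ * √ρ) * (filNorm ρ d d' * filNorm ρ h₁ g₁)
          + 3 / (ρ * √ρ) * (filNorm ρ h₂ g₂ * filNorm ρ d d') :=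
        add_le_add (D.filNorm_mulPrimitive_le hρ H₁) (H₂.filNorm_mulPrimitive_le hρ D)
    _ = 3 / (ρ * √ρ) * (filNorm ρ h₁ g₁ + filNorm ρ h₂ g₂) * filNorm ρ d d' := by ring

end MemFilZero

end MulPrimitive

/-- Local Lipschitz continuity in the ball sense of `β : X → H_ρ`, where `δ` assigns to each `x` the
derivative of `β x`. -/
def LipschitzOnBalls {X : Type*} [SeminormedAddCommGroup X] (ρ : ℝ) (β δ : X → ℝ → ℝ) : Prop :=
  ∃ L : ℝ → ℝ, MonotoneOn L (Set.Ici 0) ∧ (∀ r : ℝ, 0 ≤ r → 0 ≤ L r) ∧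
    ∀ r : ℝ, 0 ≤ r → ∀ x₁ x₂ : X, ‖x₁‖ ≤ r → ‖x₂‖ ≤ r →
      filNorm ρ (fun t => β x₁ t - β x₂ t) (fun t => δ x₁ t - δ x₂ t) ≤ L r * ‖x₁ - x₂‖

section Composition

variable {X : Type*} [SeminormedAddCommGroup X] {ρ : ℝ} {β δ : X → ℝ → ℝ}

lemma filNorm_le_of_lipschitzOnBall {r ℓ : ℝ} (hr : 0 ≤ r) (hℓ : 0 ≤ ℓ)
    (hδ : ∀ x, MemExpL2 ρ (δ x))
    (hLip : ∀ x₁ x₂ : X, ‖x₁‖ ≤ r → ‖x₂‖ ≤ r →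
      filNorm ρ (fun t => β x₁ t - β x₂ t) (fun t => δ x₁ t - δ x₂ t) ≤ ℓ * ‖x₁ - x₂‖)
    {x : X} (hx : ‖x‖ ≤ r) :
    filNorm ρ (β x) (δ x) ≤ filNorm ρ (β 0) (δ 0) + ℓ * r := by
  calc filNorm ρ (β x) (δ x)
      = filNorm ρ (fun t => β 0 t + (β x t - β 0 t)) (fun t => δ 0 t + (δ x t - δ 0 t)) := by
        simp only [add_sub_cancel]
    _ ≤ filNorm ρ (β 0) (δ 0) + filNorm ρ (fun t => β x t - β 0 t) (fun t => δ x t - δ 0 t) :=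
        filNorm_add_le _ _ (hδ 0) ((hδ x).sub (hδ 0))
    _ ≤ filNorm ρ (β 0) (δ 0) + ℓ * ‖x - 0‖ := by
        gcongr
        exact hLip x 0 hx (by simpa using hr)
    _ ≤ filNorm ρ (β 0) (δ 0) + ℓ * r := by
        rw [sub_zero]
        gcongr

lemma LipschitzOnBalls.mulPrimitive_self (hρ : 0 < ρ) (hβ : ∀ x, MemFilZero ρ (β x) (δ x))
    (hLip : LipschitzOnBalls ρ β δ) :
    LipschitzOnBalls ρ (fun x => mulPrimitive (β x) (β x))
      (fun x => mulPrimitiveDeriv (β x) (δ x) (β x)) := by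
  obtain ⟨L, L_mono, L_nonneg, hL⟩ := hLip
  set N₀ := filNorm ρ (β 0) (δ 0)
  have N₀_nonneg : 0 ≤ N₀ := filNorm_nonneg ρ (β 0) (δ 0)
  refine ⟨fun r => 3 / (ρ * √ρ) * (2 * (N₀ + L r * r)) * L r, ?_, ?_, ?_⟩
  · intro a (ha : 0 ≤ a) b (hb : 0 ≤ b) hab
    have La_nonneg := L_nonneg a ha
    have Lb_nonneg := L_nonneg b hb
    have La_le_Lb := L_mono ha hb hab
    dsimp only
    gcongr
  · intro r hr
    have := L_nonneg r hr
    positivity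
  · intro r hr x₁ x₂ hx₁ hx₂
    have := L_nonneg r hr
    have bound {x : X} (hx : ‖x‖ ≤ r) : filNorm ρ (β x) (δ x) ≤ N₀ + L r * r :=
      filNorm_le_of_lipschitzOnBall hr (L_nonneg r hr) (fun x => (hβ x).memFil.memExpL2)
        (hL r hr) hx
    refine ((hβ x₁).filNorm_mulPrimitive_self_sub_le hρ (hβ x₂)).trans ?_
    rw [mul_assoc _ (L r), two_mul]
    exact mul_le_mul (by gcongr <;> exact bound ‹_›) (hL r hr x₁ x₂ hx₁ hx₂) (filNorm_nonneg _ _ _)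
      (by positivity)

lemma exists_filNorm_mulPrimitive_self_le (hρ : 0 < ρ) (hβ : ∀ x, MemFilZero ρ (β x) (δ x)) {K : ℝ}
    (hK : 0 < K) (hgrowth : ∀ x, filNorm ρ (β x) (δ x) ≤ K * √(1 + ‖x‖)) :
    ∃ C : ℝ, 0 < C ∧ ∀ x, filNorm ρ (mulPrimitive (β x) (β x))
      (mulPrimitiveDeriv (β x) (δ x) (β x)) ≤ C * (1 + ‖x‖) := by
  refine ⟨3 / (ρ * √ρ) * K ^ 2, by positivity, fun x => ?_⟩
  calc filNorm ρ (mulPrimitive (β x) (β x)) (mulPrimitiveDeriv (β x) (δ x) (β x))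
      ≤ 3 / (ρ * √ρ) * (filNorm ρ (β x) (δ x) * filNorm ρ (β x) (δ x)) :=
        (hβ x).filNorm_mulPrimitive_le hρ (hβ x)
    _ ≤ 3 / (ρ * √ρ) * ((K * √(1 + ‖x‖)) * (K * √(1 + ‖x‖))) := by
        have := filNorm_nonneg ρ (β x) (δ x)
        gcongr <;> exact hgrowth x
    _ = 3 / (ρ * √ρ) * K ^ 2 * (1 + ‖x‖) := by
        rw [mul_mul_mul_comm, Real.mul_self_sqrt (by positivity)]
        ring

theorem filipovic_S_composition_general (hρ : 0 < ρ) (hβ : ∀ x, MemFilZero ρ (β x) (δ x)) :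
    (∀ x, MemFilZero ρ (mulPrimitive (β x) (β x)) (mulPrimitiveDeriv (β x) (δ x) (β x))) ∧
    (LipschitzOnBalls ρ β δ → LipschitzOnBalls ρ (fun x => mulPrimitive (β x) (β x))
      (fun x => mulPrimitiveDeriv (β x) (δ x) (β x))) ∧
    ∀ K : ℝ, 0 < K → (∀ x, filNorm ρ (β x) (δ x) ≤ K * √(1 + ‖x‖)) →
      ∃ C : ℝ, 0 < C ∧ ∀ x, filNorm ρ (mulPrimitive (β x) (β x))
        (mulPrimitiveDeriv (β x) (δ x) (β x)) ≤ C * (1 + ‖x‖) :=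
  ⟨fun x => (hβ x).memFilZero_mulPrimitive hρ (hβ x), .mulPrimitive_self hρ hβ,
    fun _ => exists_filNorm_mulPrimitive_self_le hρ hβ⟩

end Composition

/-- if `β : X → H⁰_ρ` (with derivative assignment `δ`) is locally Lipschitz
in the ball sense and satisfies `‖β(x)‖_ρ ≤ K √(1 + ‖x‖)`, then `α(x) = β(x)·𝓘β(x)`
takes values in `H⁰_ρ`, is locally Lipschitz in the ball sense, and satisfies the linear
growth bound `‖α(x)‖_ρ ≤ C (1 + ‖x‖)`. -/
theorem filipovic_S_composition (ρ : ℝ) (hρ : 0 < ρ)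
    {X : Type*} [NormedAddCommGroup X] [NormedSpace ℝ X]
    (β δ : X → ℝ → ℝ)
    (hmem : ∀ x : X, MemFil ρ (β x) (δ x))
    (hlim : ∀ x : X, Tendsto (β x) atTop (nhds 0))
    (L : ℝ → ℝ) (hLmono : MonotoneOn L (Set.Ici 0))
    (hLnn : ∀ r : ℝ, 0 ≤ r → 0 ≤ L r)
    (hLip : ∀ r : ℝ, 0 ≤ r → ∀ x₁ x₂ : X, ‖x₁‖ ≤ r → ‖x₂‖ ≤ r →
      filNorm ρ (fun t => β x₁ t - β x₂ t) (fun t => δ x₁ t - δ x₂ t)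
        ≤ L r * ‖x₁ - x₂‖)
    (K : ℝ) (hK : 0 < K)
    (hgrowth : ∀ x : X, filNorm ρ (β x) (δ x) ≤ K * Real.sqrt (1 + ‖x‖)) :
    (∀ x : X,
      MemFil ρ (fun ξ => β x ξ * ∫ t in (0:ℝ)..ξ, β x t)
        (fun t => δ x t * (∫ s in (0:ℝ)..t, β x s) + β x t * β x t) ∧
      Tendsto (fun ξ => β x ξ * ∫ t in (0:ℝ)..ξ, β x t) atTop (nhds 0)) ∧
    (∃ L' : ℝ → ℝ, MonotoneOn L' (Set.Ici 0) ∧ (∀ r : ℝ, 0 ≤ r → 0 ≤ L' r) ∧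
      ∀ r : ℝ, 0 ≤ r → ∀ x₁ x₂ : X, ‖x₁‖ ≤ r → ‖x₂‖ ≤ r →
        filNorm ρ
          (fun ξ => β x₁ ξ * (∫ t in (0:ℝ)..ξ, β x₁ t)
            - β x₂ ξ * ∫ t in (0:ℝ)..ξ, β x₂ t)
          (fun t => (δ x₁ t * (∫ s in (0:ℝ)..t, β x₁ s) + β x₁ t * β x₁ t)
            - (δ x₂ t * (∫ s in (0:ℝ)..t, β x₂ s) + β x₂ t * β x₂ t))
          ≤ L' r * ‖x₁ - x₂‖) ∧
    (∃ C : ℝ, 0 < C ∧ ∀ x : X,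
      filNorm ρ (fun ξ => β x ξ * ∫ t in (0:ℝ)..ξ, β x t)
        (fun t => δ x t * (∫ s in (0:ℝ)..t, β x s) + β x t * β x t)
        ≤ C * (1 + ‖x‖)) := by
  obtain ⟨hmem_α, hLip_α, hgrowth_α⟩ :=
    filipovic_S_composition_general hρ fun x => ⟨hmem x, hlim x⟩
  exact ⟨fun x => ⟨(hmem_α x).memFil, (hmem_α x).tendsto_zero⟩,
    hLip_α ⟨L, hLmono, hLnn, hLip⟩, hgrowth_α K hK hgrowth⟩
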